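/- arXiv:1501.03566 — 2 statements merged into one kernel-verified Lean document; each statement's English description precedes it below -/
import Mathlib

section
/- Let d ≥ 1, let M be a t×n binary matrix that is d-disjunct and has no isolated columns, and let c be a column of M with weight |c| = d+s where 1 ≤ s ≤ d−1. Then the number of non-private 2-subsets of c satisfies |N(c)| ≤ max{ C(2s−1, 2), C(d+s, 2) − C(d+1, 2) }, where C(a,b) denotes the binomial coefficient. -/
open Finset

/-- A family of columns (each column = the finset of rows where it has a 1)
is `d`-disjunct if no column is contained in the union of `≤ d` other columns. -/
def Disjunct {ι ρ : Type*} [DecidableEq ρ] (d : ℕ) (col : ι → Finset ρ) : Prop :=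
  ∀ j : ι, ∀ S : Finset ι, j ∉ S → S.card ≤ d → ¬ col j ⊆ S.biUnion col

/-- A column `j` is isolated if it contains a row belonging to no other column. -/
def IsolatedCol {ι ρ : Type*} (col : ι → Finset ρ) (j : ι) : Prop :=
  ∃ i ∈ col j, ∀ j', i ∈ col j' → j' = j

/-!
A system `P` of sets, each contained in a column other than `c`, together with the singletons of
the rows of `c` outside `⋃ P` covers column `c`, since no row of `c` is private. So `s` disjoint
non-private pairs would cover `c` by `s + (d + s - 2 * s) = d` other columns, against
`d`-disjunctness. The non-private pairs thus form a graph on `d + s` vertices without a matching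
of size `s`, and the Erdős–Gallai theorem bounds its number of edges.

The Erdős–Gallai theorem follows by shifting. Replacing `j` by `i < j` in the edges creates no new
matching, so the graph may be assumed shifted. On the vertices `0, …, n - 1` it then misses one of
the disjoint pairs `{a, b}` with `a < b` and `a + b = 2 * s - 1`, hence each of its edges lies below
`b` or has an endpoint below `a`. The resulting bound is convex in `a`, and the two entries of the
maximum are its values at `a = 0` and `a = s - 1`.
-/

open scoped FinsetFamily

section Matching

variable {V W : Type*}

/-- A matching of size `s` in a set family `A`: a subfamily of `s` pairwise disjoint members. -/
def HasMatching (A : Finset (Finset V)) (s : ℕ) : Prop :=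
  ∃ P ⊆ A, #P = s ∧ (P : Set (Finset V)).PairwiseDisjoint id

lemma pairwiseDisjoint_map_mapEmbedding (f : V ↪ W) {P : Finset (Finset V)}
    (hP : (P : Set (Finset V)).PairwiseDisjoint id) :
    (P.map (mapEmbedding f).toEmbedding : Set (Finset W)).PairwiseDisjoint id := by
  rw [coe_map, (mapEmbedding f).toEmbedding.injective.injOn.pairwiseDisjoint_image]
  exact fun e he e' he' hne ↦ (disjoint_map f).2 (hP he he' hne)

lemma HasMatching.map {A : Finset (Finset V)} {s : ℕ} (hA : HasMatching A s) (f : V ↪ W) :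
    HasMatching (A.map (mapEmbedding f).toEmbedding) s := by
  obtain ⟨P, hPA, hPs, hP⟩ := hA
  exact ⟨_, map_subset_map.2 hPA, (card_map _).trans hPs, pairwiseDisjoint_map_mapEmbedding f hP⟩

lemma hasMatching_of_pairwise_disjoint {A : Finset (Finset V)} {s : ℕ}
    {e : Fin s → Finset V} (heA : ∀ i, e i ∈ A) (hne : ∀ i, (e i).Nonempty)
    (he : Pairwise fun i j ↦ Disjoint (e i) (e j)) : HasMatching A s := by
  classical
  have e_inj : Function.Injective e := fun i j hij ↦ by
    by_contra hij_ne
    exact (hne i).ne_empty (disjoint_self.1 (by simpa only [hij] using he hij_ne))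
  refine ⟨univ.image e, image_subset_iff.2 fun i _ ↦ heA i, ?_, ?_⟩
  · rw [card_image_of_injective _ e_inj, card_univ, Fintype.card_fin]
  · rw [coe_image, e_inj.injOn.pairwiseDisjoint_image]
    exact fun i _ j _ hij ↦ he hij

end Matching

section Shifting

variable {V M : Type*} [DecidableEq V]

lemma map_swap_of_notMem_of_mem {i j : V} {e : Finset V} (hi : i ∉ e) (hj : j ∈ e) :
    e.map (Equiv.swap i j).toEmbedding = (e ∪ {i}) \ {j} := by
  ext x
  simp only [mem_map_equiv, Equiv.symm_swap, Equiv.swap_apply_def, mem_sdiff, mem_union,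
    mem_singleton]
  grind

lemma map_swap_of_notMem {i j : V} {e : Finset V} (hi : i ∉ e) (hj : j ∉ e) :
    e.map (Equiv.swap i j).toEmbedding = e := by
  ext x
  simp only [mem_map_equiv, Equiv.symm_swap, Equiv.swap_apply_def]
  grind

lemma mem_of_mem_compression_of_notMem {i j : V} {A : Finset (Finset V)} {e : Finset V}
    (he : e ∈ 𝓒 {i} {j} A) (heA : e ∉ A) : i ∈ e :=
  singleton_subset_iff.1 (UV.le_of_mem_compression_of_notMem he heA)

lemma map_swap_mem_of_mem_compression_of_notMem {i j : V} {A : Finset (Finset V)} {e : Finset V}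
    (he : e ∈ 𝓒 {i} {j} A) (heA : e ∉ A) : e.map (Equiv.swap i j).toEmbedding ∈ A := by
  have hi : i ∈ e := mem_of_mem_compression_of_notMem he heA
  have hj : j ∉ e := disjoint_singleton_left.1 (UV.disjoint_of_mem_compression_of_notMem he heA)
  rw [Equiv.swap_comm, map_swap_of_notMem_of_mem hj hi]
  exact UV.sup_sdiff_mem_of_mem_compression_of_notMem he heA

lemma map_swap_mem_of_mem_compression {i j : V} {A : Finset (Finset V)} {e : Finset V}
    (he : e ∈ 𝓒 {i} {j} A) (hi : i ∉ e) : e.map (Equiv.swap i j).toEmbedding ∈ A := by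
  by_cases hj : j ∈ e
  · rw [map_swap_of_notMem_of_mem hi hj]
    exact UV.sup_sdiff_mem_of_mem_compression he (singleton_subset_iff.2 hj)
      (disjoint_singleton_left.2 hi)
  · rw [map_swap_of_notMem hi hj]
    by_contra heA
    exact hi (mem_of_mem_compression_of_notMem he heA)

lemma HasMatching.of_compression {i j : V} {A : Finset (Finset V)} {s : ℕ}
    (h : HasMatching (𝓒 {i} {j} A) s) : HasMatching A s := by
  obtain ⟨P, hPA, hPs, hP⟩ := h
  by_cases hPA' : P ⊆ A
  · exact ⟨P, hPA', hPs, hP⟩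
  -- The new edge `e ∋ i` is the only edge of `P` through `i`, so exchanging `i` and `j` in `P`
  -- undoes its shift, and the edge of `P` through `j`, if any, stays in `A`.
  obtain ⟨e, heP, heA⟩ := not_subset.1 hPA'
  have hie : i ∈ e := mem_of_mem_compression_of_notMem (hPA heP) heA
  have eq_e_of_mem : ∀ g ∈ P, i ∈ g → g = e := fun g hg hig ↦
    hP.elim_finset hg heP i hig hie
  refine ⟨P.map (mapEmbedding (Equiv.swap i j).toEmbedding).toEmbedding, ?_,
    (card_map _).trans hPs, pairwiseDisjoint_map_mapEmbedding _ hP⟩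
  rw [map_subset_iff_subset_preimage]
  intro g hg
  rw [mem_preimage]
  by_cases hgA : g ∈ A
  · exact map_swap_mem_of_mem_compression (hPA hg) fun hig ↦ heA (eq_e_of_mem g hg hig ▸ hgA)
  · exact map_swap_mem_of_mem_compression_of_notMem (hPA hg) hgA

variable [AddCommMonoid M] [PartialOrder M] [IsOrderedCancelAddMonoid M]

lemma sum_compress_lt_sum {w : V → M} {i j : V} (hij : w i < w j) {e : Finset V}
    (he : UV.compress {i} {j} e ≠ e) : ∑ x ∈ UV.compress {i} {j} e, w x < ∑ x ∈ e, w x := by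
  unfold UV.compress at he ⊢
  split_ifs at he ⊢ with h
  · have hi : i ∉ e := disjoint_singleton_left.1 h.1
    have hj : j ∈ e := singleton_subset_iff.1 h.2
    have compress_eq : (e ⊔ {i}) \ {j} = insert i (e.erase j) := by
      ext x
      simp only [sup_eq_union, mem_sdiff, mem_union, mem_singleton, mem_insert, mem_erase]
      grind
    rw [compress_eq, sum_insert (mt mem_of_mem_erase hi), ← add_sum_erase e w hj]
    gcongr
  · exact absurd rfl he

lemma sum_compression_lt_sum {α : Type*} [GeneralizedBooleanAlgebra α]
    [DecidableRel (@Disjoint α _ _)] [DecidableLE α] [DecidableEq α] {u v : α} {A : Finset α}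
    {w : α → M} (hw : ∀ a, UV.compress u v a ≠ a → w (UV.compress u v a) < w a)
    (hA : ¬ UV.IsCompressed u v A) : ∑ a ∈ 𝓒 u v A, w a < ∑ a ∈ A, w a := by
  have moved_nonempty : {a ∈ A | UV.compress u v a ∉ A}.Nonempty := by
    contrapose! hA
    have fixed : {a ∈ A | UV.compress u v a ∈ A} = A :=
      filter_true_of_mem fun a ha ↦ not_not.1 (filter_eq_empty_iff.1 hA ha)
    rw [UV.IsCompressed, UV.compression, filter_image, hA, fixed, image_empty, union_empty]
  rw [UV.compression, sum_union UV.compress_disjoint, filter_image,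
    sum_image UV.compress_injOn, ← sum_filter_add_sum_filter_not A (UV.compress u v · ∈ A)]
  gcongr ?_ + ?_
  refine sum_lt_sum_of_nonempty moved_nonempty fun a ha ↦ hw a ?_
  obtain ⟨haA, hca⟩ := mem_filter.1 ha
  exact fun h ↦ hca (h.symm ▸ haA)

end Shifting

section Shifted

variable {V : Type*} [LinearOrder V]

/-- A set family is shifted if replacing an element of a member by a smaller new element yields
another member. The shift from `j` to `i` is the UV-compression along `{i}` and `{j}`. -/
def IsShifted (A : Finset (Finset V)) : Prop :=
  ∀ ⦃i j : V⦄, i < j → UV.IsCompressed {i} {j} A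

lemma exists_isShifted [LocallyFiniteOrderBot V] (A : Finset (Finset V)) :
    ∃ B : Finset (Finset V), IsShifted B ∧ #B = #A ∧
      (∀ r, (A : Set (Finset V)).Sized r → (B : Set (Finset V)).Sized r) ∧
      ∀ s, HasMatching B s → HasMatching A s := by
  induction hm : ∑ e ∈ A, ∑ x ∈ e, #(Iio x) using Nat.strong_induction_on generalizing A with
  | _ m ih =>
  by_cases hA : IsShifted A
  · exact ⟨A, hA, rfl, fun _ ↦ id, fun _ ↦ id⟩
  obtain ⟨i, j, hij, hA⟩ : ∃ i j, i < j ∧ ¬ UV.IsCompressed {i} {j} A := by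
    simpa only [IsShifted, not_forall, exists_prop] using hA
  have card_Iio_lt : #(Iio i) < #(Iio j) := card_lt_card (Iio_ssubset_Iio hij)
  have weight_lt : ∑ e ∈ 𝓒 {i} {j} A, ∑ x ∈ e, #(Iio x) < ∑ e ∈ A, ∑ x ∈ e, #(Iio x) :=
    sum_compression_lt_sum (fun _ ↦ sum_compress_lt_sum (w := fun x ↦ #(Iio x)) card_Iio_lt) hA
  obtain ⟨B, hB, hcard, hsized, hmatching⟩ := ih _ (hm ▸ weight_lt) (𝓒 {i} {j} A) rfl
  exact ⟨B, hB, hcard.trans (UV.card_compression ..),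
    fun r hr ↦ hsized r (hr.uvCompression (by simp only [card_singleton])),
    fun s hs ↦ (hmatching s hs).of_compression⟩

lemma IsShifted.pair_mem_of_le_left {A : Finset (Finset V)} (hA : IsShifted A) {i j y : V}
    (hij : i ≤ j) (hiy : i ≠ y) (hjy : j ≠ y) (hmem : {j, y} ∈ A) : {i, y} ∈ A := by
  obtain rfl | hij := hij.eq_or_lt
  · exact hmem
  have hmem' : {j, y} ∈ 𝓒 {i} {j} A := by rwa [(hA hij).eq]
  convert UV.sup_sdiff_mem_of_mem_compression hmem' (by simp) (by simp [hij.ne, hiy]) using 1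
  ext x
  simp only [sup_eq_union, mem_sdiff, mem_union, mem_singleton, mem_insert]
  grind

lemma IsShifted.pair_mem_of_le {A : Finset (Finset V)} (hA : IsShifted A) {a b x y : V}
    (hax : a ≤ x) (hby : b ≤ y) (hab : a < b) (hxy : x ≠ y) (hmem : {x, y} ∈ A) : {a, b} ∈ A := by
  have hay : {a, y} ∈ A := hA.pair_mem_of_le_left hax (hab.trans_le hby).ne hxy hmem
  rw [pair_comm] at hay ⊢
  exact hA.pair_mem_of_le_left hby hab.ne' (hab.trans_le hby).ne' hay

lemma IsShifted.subset_of_pair_notMem [LocallyFiniteOrderBot V] [LocallyFiniteOrderTop V]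
    {A : Finset (Finset V)} (hA : IsShifted A) (hA2 : (A : Set (Finset V)).Sized 2) {a b : V}
    (hab : a < b) (habA : {a, b} ∉ A) :
    A ⊆ (Iio b).powersetCard 2 ∪ image₂ (fun x y ↦ {x, y}) (Iio a) (Ici b) := by
  intro e he
  obtain ⟨x, y, hxy, rfl⟩ : ∃ x y, x < y ∧ e = {x, y} := by
    obtain ⟨x, y, hne, rfl⟩ := card_eq_two.1 (hA2 he)
    obtain h | h := hne.lt_or_gt
    · exact ⟨x, y, h, rfl⟩
    · exact ⟨y, x, h, pair_comm x y⟩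
  rw [mem_union]
  obtain hyb | hby := lt_or_ge y b
  · refine .inl (mem_powersetCard.2 ⟨?_, card_pair hxy.ne⟩)
    simp only [insert_subset_iff, singleton_subset_iff, mem_Iio]
    exact ⟨hxy.trans hyb, hyb⟩
  · have hxa : x < a := lt_of_not_ge fun hax ↦ habA (hA.pair_mem_of_le hax hby hab hxy.ne he)
    exact .inr (mem_image₂_of_mem (mem_Iio.2 hxa) (mem_Ici.2 hby))

end Shifted

section ErdosGallai

lemma exists_pair_notMem_of_not_hasMatching {n s : ℕ} (hs : 2 * s ≤ n)
    {A : Finset (Finset (Fin n))} (hA : ¬ HasMatching A s) :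
    ∃ a b : Fin n, a < b ∧ (a : ℕ) + b + 1 = 2 * s ∧ {a, b} ∉ A := by
  contrapose! hA
  let left (i : Fin s) : Fin n := ⟨i, by omega⟩
  let right (i : Fin s) : Fin n := ⟨2 * s - 1 - i, by omega⟩
  refine hasMatching_of_pairwise_disjoint (e := fun i ↦ {left i, right i})
    (fun i ↦ hA _ _ (Fin.mk_lt_mk.2 (by omega)) (by dsimp only [left, right]; omega))
    (fun i ↦ insert_nonempty _ _) fun i j hij ↦ ?_
  simp only [left, right, disjoint_insert_left, disjoint_singleton_left, mem_insert,
    mem_singleton, Fin.ext_iff]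
  omega

lemma card_le_of_isShifted_of_pair_notMem {n : ℕ} {A : Finset (Finset (Fin n))}
    (hA : IsShifted A) (hA2 : (A : Set (Finset (Fin n))).Sized 2) {a b : Fin n} (hab : a < b)
    (habA : {a, b} ∉ A) : #A ≤ (b : ℕ).choose 2 + a * (n - b) :=
  calc
    #A ≤ #((Iio b).powersetCard 2) +
        #(image₂ (fun x y ↦ ({x, y} : Finset (Fin n))) (Iio a) (Ici b)) :=
      (card_le_card (hA.subset_of_pair_notMem hA2 hab habA)).trans (card_union_le _ _)
    _ ≤ (#(Iio b)).choose 2 + #(Iio a) * #(Ici b) :=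
      add_le_add (card_powersetCard 2 _).le (card_image₂_le _ _ _)
    _ = (b : ℕ).choose 2 + a * (n - b) := by rw [Fin.card_Iio, Fin.card_Iio, Fin.card_Ici]

lemma choose_two_add_mul_le_max {n s a b : ℕ} (hs : 2 * s ≤ n) (hab : a < b)
    (hsum : a + b + 1 = 2 * s) :
    b.choose 2 + a * (n - b) ≤
      max ((2 * s - 1).choose 2) (n.choose 2 - (n - s + 1).choose 2) := by
  obtain ⟨k, rfl⟩ : ∃ k, s = a + k + 1 := ⟨s - a - 1, by omega⟩
  obtain ⟨q, rfl⟩ : ∃ q, n = 2 * (a + k + 1) + q := ⟨_, (Nat.add_sub_of_le hs).symm⟩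
  obtain rfl : b = a + 2 * k + 1 := by omega
  rw [show 2 * (a + k + 1) + q - (a + 2 * k + 1) = a + 1 + q by omega,
    show 2 * (a + k + 1) - 1 = 2 * a + 2 * k + 1 by omega,
    show 2 * (a + k + 1) + q - (a + k + 1) + 1 = a + k + q + 2 by omega, le_max_iff]
  obtain hq | hk : 2 * q + 1 ≤ a + 4 * k ∨ k ≤ 2 * a + 2 * q + 1 := by omega
  · left
    have gap_nonneg : (0 : ℚ) ≤ a * (a + 4 * k - (2 * q + 1)) / 2 := by
      have : (2 * q + 1 : ℚ) ≤ a + 4 * k := mod_cast hq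
      have := sub_nonneg.2 this
      positivity
    rw [← Nat.cast_le (α := ℚ), ← sub_nonneg]
    refine gap_nonneg.trans_eq ?_
    push_cast [Nat.cast_choose_two]
    ring
  · right
    apply Nat.le_sub_of_add_le
    have gap_nonneg : (0 : ℚ) ≤ k * (2 * a + 2 * q + 1 - k) / 2 := by
      have : (k : ℚ) ≤ 2 * a + 2 * q + 1 := mod_cast hk
      have := sub_nonneg.2 this
      positivity
    rw [← Nat.cast_le (α := ℚ), ← sub_nonneg]
    refine gap_nonneg.trans_eq ?_
    push_cast [Nat.cast_choose_two]
    ring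

/-- The **Erdős–Gallai theorem** on matchings. -/
theorem card_le_max_choose_two_of_not_hasMatching {V : Type*} {X : Finset V}
    {A : Finset (Finset V)} {s : ℕ} (hs : 2 * s ≤ #X) (hAX : A ⊆ X.powersetCard 2)
    (hA : ¬ HasMatching A s) :
    #A ≤ max ((2 * s - 1).choose 2) ((#X).choose 2 - (#X - s + 1).choose 2) := by
  let f : Fin #X ↪ V := X.equivFin.symm.toEmbedding.trans (.subtype _)
  have hX : X = univ.map f := by
    rw [← map_map, univ_map_equiv_to_embedding]
    exact X.attach_map_val.symm
  rw [hX, powersetCard_map, subset_map_iff] at hAX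
  obtain ⟨A', hA', rfl⟩ := hAX
  obtain ⟨B, hB, hcard, hsized, hmatching⟩ := exists_isShifted A'
  have hB2 : (B : Set (Finset (Fin #X))).Sized 2 :=
    hsized 2 fun e he ↦ (mem_powersetCard.1 (hA' he)).2
  obtain ⟨a, b, hab, hsum, habB⟩ :=
    exists_pair_notMem_of_not_hasMatching hs fun h ↦ hA ((hmatching s h).map f)
  rw [card_map, ← hcard]
  exact (card_le_of_isShifted_of_pair_notMem hB hB2 hab habB).trans
    (choose_two_add_mul_le_max hs hab hsum)

end ErdosGallai

section Disjunct

variable {ι ρ : Type*} [DecidableEq ρ] {d s : ℕ} {col : ι → Finset ρ} {c : ι}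

lemma Disjunct.lt_card_of_subset_biUnion (hdis : Disjunct d col) {E : Finset (Finset ρ)}
    (hE : ∀ e ∈ E, ∃ j, j ≠ c ∧ e ⊆ col j) (hcov : col c ⊆ E.biUnion id) : d < #E := by
  classical
  have : Nonempty ι := ⟨c⟩
  choose! J hJc hJ using hE
  by_contra! hcard
  refine hdis c (E.image J) ?_ (card_image_le.trans hcard) (hcov.trans ?_)
  · simpa only [mem_image, not_exists, not_and] using hJc
  · rw [image_biUnion]
    exact biUnion_mono hJ

lemma Disjunct.lt_card_add_card_sdiff (hdis : Disjunct d col) (hc : ¬ IsolatedCol col c)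
    {P : Finset (Finset ρ)} (hP : ∀ e ∈ P, ∃ j, j ≠ c ∧ e ⊆ col j) :
    d < #P + #(col c \ P.biUnion id) := by
  let E := P ∪ (col c \ P.biUnion id).image singleton
  have hE : ∀ e ∈ E, ∃ j, j ≠ c ∧ e ⊆ col j := by
    intro e he
    obtain he | he := mem_union.1 he
    · exact hP e he
    obtain ⟨x, hx, rfl⟩ := mem_image.1 he
    simp only [IsolatedCol, not_exists, not_and, not_forall] at hc
    obtain ⟨j, hxj, hj⟩ := hc x (mem_sdiff.1 hx).1
    exact ⟨j, hj, singleton_subset_iff.2 hxj⟩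
  have hcov : col c ⊆ E.biUnion id := by
    rw [union_biUnion, image_biUnion]
    simp only [id, biUnion_singleton_eq_self]
    exact le_sup_sdiff
  exact (hdis.lt_card_of_subset_biUnion hE hcov).trans_le
    ((card_union_le _ _).trans (Nat.add_le_add_left card_image_le _))

lemma Disjunct.not_hasMatching (hdis : Disjunct d col) (hc : ¬ IsolatedCol col c) (hsd : s ≤ d)
    (hcard : #(col c) = d + s) {N : Finset (Finset ρ)} (hN2 : N ⊆ (col c).powersetCard 2)
    (hN : ∀ e ∈ N, ∃ j, j ≠ c ∧ e ⊆ col j) : ¬ HasMatching N s := by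
  rintro ⟨P, hPN, hPs, hP⟩
  have hP2 : ∀ e ∈ P, e ⊆ col c ∧ #e = 2 := fun e he ↦ mem_powersetCard.1 (hN2 (hPN he))
  have card_biUnion_P : #(P.biUnion id) = s * 2 := by
    rw [card_biUnion hP, sum_const_nat (f := fun e ↦ #(id e)) fun e he ↦ (hP2 e he).2, hPs]
  have biUnion_P_subset : P.biUnion id ⊆ col c := biUnion_subset.2 fun e he ↦ (hP2 e he).1
  have := hdis.lt_card_add_card_sdiff hc fun e he ↦ hN e (hPN he)
  rw [card_sdiff_of_subset biUnion_P_subset, card_biUnion_P, hPs, hcard] at this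
  omega

theorem nonprivate_pairs_card_bound_general (hsd : s ≤ d) (hdis : Disjunct d col)
    (hiso : ¬ IsolatedCol col c) (hc : #(col c) = d + s)
    [DecidablePred fun e : Finset ρ ↦ ∃ j', j' ≠ c ∧ e ⊆ col j'] :
    #{e ∈ (col c).powersetCard 2 | ∃ j', j' ≠ c ∧ e ⊆ col j'} ≤
      max ((2 * s - 1).choose 2) ((d + s).choose 2 - (d + 1).choose 2) := by
  have hmatching := hdis.not_hasMatching hiso hsd hc (filter_subset _ _)
    fun e he ↦ (mem_filter.1 he).2
  have bound := card_le_max_choose_two_of_not_hasMatching (by omega) (filter_subset _ _) hmatching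
  rwa [hc, Nat.add_sub_cancel] at bound

end Disjunct

/-- In a `d`-disjunct matrix with no isolated columns, a column `c` of weight
`d + s` with `1 ≤ s ≤ d − 1` has at most
`max (C(2s−1, 2)) (C(d+s, 2) − C(d+1, 2))` non-private 2-subsets. -/
theorem nonprivate_pairs_card_bound
    (d s t n : ℕ) (hd : 1 ≤ d) (hs1 : 1 ≤ s) (hs2 : s ≤ d - 1)
    (col : Fin n → Finset (Fin t))
    (hdis : Disjunct d col)
    (hiso : ∀ j, ¬ IsolatedCol col j)
    (c : Fin n) (hc : (col c).card = d + s) :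
    (((col c).powersetCard 2).filter (fun e => ∃ j', j' ≠ c ∧ e ⊆ col j')).card ≤
      max (Nat.choose (2 * s - 1) 2) (Nat.choose (d + s) 2 - Nat.choose (d + 1) 2) :=
  nonprivate_pairs_card_bound_general (by omega) hdis (hiso c) hc
end

section
/- For all d ≥ 1 and n ≥ 1, the minimal t such that there exists a t×n d-disjunct binary matrix satisfies t(d,n) ≥ min{ ((15+√33)/24)·d², n }. -/
open Finset

/-- `tmin d n` is the minimal `t` such that a `t × n` `d`-disjunct matrix exists. -/
noncomputable def tmin (d n : ℕ) : ℕ :=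
  sInf {t : ℕ | ∃ col : Fin n → Finset (Fin t), Disjunct d col}

/-!
Suppose that every row of the column `j` also lies in another column, and join two of these rows if
some other column contains both. A matching with `k` edges is covered by `k` other columns, and so
is each remaining row by one more, so `d`-disjunctness forces `k ≤ #(col j) - d - 1`. When `col j`
has at most `c * (2 * d - 1)` rows, the Erdős–Gallai bound on the number of edges in terms of `k`
leaves at least `c * d ^ 2` ordered pairs of rows that are private to `j`. Private pairs of
distinct columns are distinct, so if all `n` columns are of this kind and `t < n`, then
`n * c * d ^ 2 ≤ t ^ 2 ≤ n * t`.

All other columns are deleted beforehand: a column with a row of its own together with that row,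
and a column with more than `c * (2 * d - 1)` rows together with all its rows, which leaves a
family that is `(d - 1)`-disjunct. The constant is the larger root of `12 * c ^ 2 - 15 * c + 4`.
-/

section Matchable

open SimpleGraph

variable {V : Type*} {G : SimpleGraph V} {S R C : Finset V} {a x y u v : V}

/-- A finite vertex set `S` is matchable if some matching of `G` covers exactly `S`; thus the
matching number of the graph induced on `C` is half the largest size of a matchable `S ⊆ C`. -/
def Matchable (G : SimpleGraph V) (S : Finset V) : Prop :=
  ∃ M : G.Subgraph, M.IsMatching ∧ M.verts = S

lemma matchable_empty : Matchable G ∅ :=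
  ⟨⊥, fun v hv ↦ absurd hv (Set.notMem_empty v), by simp⟩

lemma Matchable.even_card (hS : Matchable G S) : Even #S := by
  obtain ⟨M, hM, hMS⟩ := hS
  have : Fintype M.verts := Fintype.ofFinset S fun x ↦ by simp [hMS]
  simpa [hMS] using hM.even_card

section DecidableEq

variable [DecidableEq V]

lemma Matchable.insert_insert (hS : Matchable G S) (hxy : G.Adj x y) (hx : x ∉ S) (hy : y ∉ S) :
    Matchable G (insert x (insert y S)) := by
  obtain ⟨M, hM, hMS⟩ := hS
  have hdisj : Disjoint (G.subgraphOfAdj hxy).support M.support := by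
    rw [hM.support_eq_verts, hMS, support_subgraphOfAdj, Set.disjoint_left]
    rintro z (rfl | rfl)
    exacts [hx, hy]
  refine ⟨G.subgraphOfAdj hxy ⊔ M, (Subgraph.IsMatching.subgraphOfAdj hxy).sup hM hdisj, ?_⟩
  simp [hMS, Set.insert_union]

lemma Matchable.exists_adj_sdiff (hS : Matchable G S) (ha : a ∈ S) :
    ∃ b ∈ S, G.Adj a b ∧ Matchable G (S \ {a, b}) := by
  obtain ⟨M, hM, hMS⟩ := hS
  have hmem (z : V) : z ∈ M.verts ↔ z ∈ S := by simp [hMS]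
  obtain ⟨b, hab, -⟩ := hM ((hmem a).2 ha)
  refine ⟨b, (hmem b).1 (M.edge_vert hab.symm), hab.adj_sub,
    M.deleteVerts {a, b}, ?_, by simp [hMS]⟩
  rintro v ⟨hv, hvab⟩
  obtain ⟨w, hvw, hw⟩ := hM hv
  have hwab : w ∉ ({a, b} : Set V) := by
    rintro (rfl | rfl)
    · exact hvab (.inr (hM.eq_of_adj_left hvw.symm hab))
    · exact hvab (.inl (hM.eq_of_adj_right hvw hab))
  exact ⟨w, Subgraph.deleteVerts_adj.2 ⟨hv, hvab, M.edge_vert hvw.symm, hwab, hvw⟩,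
    fun z hz ↦ hw z (Subgraph.deleteVerts_adj.1 hz).2.2.2.2⟩

/- Follow the path from `a` that alternates between the matchings of `S` and of `R`. Its last
vertex is the `u` or the `x` of the conclusion, according to which matching the last edge comes
from. -/
lemma Matchable.exchange (hS : Matchable G S) (hR : Matchable G R) (haS : a ∈ S) (haR : a ∉ R) :
    (∃ u ∈ R \ S, Matchable G (insert u (S.erase a))) ∨
      ∃ x ∈ S \ R, x ≠ a ∧ Matchable G (insert a (insert x R)) := by
  induction S using Finset.strongInduction generalizing R a with
  | H S ih =>
    obtain ⟨b, hbS, hab, hS'⟩ := hS.exists_adj_sdiff haS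
    by_cases hbR : b ∈ R
    swap
    · exact .inr ⟨b, by simp [*], hab.ne', hR.insert_insert hab haR hbR⟩
    obtain ⟨c, hcR, hbc, hR'⟩ := hR.exists_adj_sdiff hbR
    have hca : c ≠ a := by grind
    have hcb : c ≠ b := hbc.ne'
    by_cases hcS : c ∈ S
    swap
    · have hswap : insert c (S.erase a) = insert b (insert c (S \ {a, b})) := by grind
      exact .inl ⟨c, by simp [*], hswap ▸ hS'.insert_insert hbc (by simp) (by simp [hcS])⟩
    specialize ih (S \ {a, b}) (sdiff_ssubset (by grind) ⟨a, by simp⟩) hS' hR' (a := c)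
      (by simp [*]) (by simp)
    obtain ⟨u, hu, hSu⟩ | ⟨x, hx, hxc, hRx⟩ := ih
    · have hswap : insert u (S.erase a) =
          insert b (insert c (insert u ((S \ {a, b}).erase c))) := by grind
      refine .inl ⟨u, by grind, hswap ▸ hSu.insert_insert hbc ?_ ?_⟩ <;> grind
    · have hswap : insert a (insert x R) =
          insert a (insert b (insert c (insert x (R \ {b, c})))) := by grind
      refine .inr ⟨x, by grind, by grind, hswap ▸ hRx.insert_insert hab ?_ ?_⟩ <;> grind

lemma Matchable.not_adj_of_mem_sdiff (hS : Matchable G S) (hSC : S ⊆ C)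
    (hmax : ∀ R ⊆ C, Matchable G R → #R ≤ #S) (hu : u ∈ C \ S) (hv : v ∈ C \ S) :
    ¬ G.Adj u v := by
  intro huv
  rw [mem_sdiff] at hu hv
  have hle := hmax _ (by grind) (hS.insert_insert huv hu.2 hv.2)
  rw [card_insert_of_notMem (by simp [huv.ne, hu.2]), card_insert_of_notMem hv.2] at hle
  omega

lemma Matchable.eq_of_adj_of_mem_sdiff (hS : Matchable G S) (hSC : S ⊆ C)
    (hmax : ∀ R ⊆ C, Matchable G R → #R ≤ #S) (ha : a ∈ S)
    (hR : Matchable G R) (hRC : R ⊆ C.erase a) (hSR : #S ≤ #R)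
    (hu : u ∈ C \ S) (hv : v ∈ C \ S) (hau : G.Adj a u) (hav : G.Adj a v) : u = v := by
  rw [subset_erase] at hRC
  obtain ⟨z, hz, hSz⟩ | ⟨x, hx, hxa, hRx⟩ := hS.exchange hR ha hRC.2
  · by_contra huv
    obtain ⟨w, hw, hwz, haw⟩ : ∃ w ∈ C \ S, w ≠ z ∧ G.Adj a w := by
      by_cases huz : u = z
      · exact ⟨v, hv, fun hvz ↦ huv (huz.trans hvz.symm), hav⟩
      · exact ⟨u, hu, huz, hau⟩
    have hwS : w ∉ S := (mem_sdiff.1 hw).2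
    have hle := hmax _ (by grind) (hSz.insert_insert haw (by grind) (by grind))
    grind
  · have hle := hmax _ (by grind) hRx
    grind

variable [DecidableRel G.Adj]

lemma card_interedges_self_le_add_of_erase (ha : a ∈ C) :
    #(G.interedges C C) ≤ 2 * (#C - 1) + #(G.interedges (C.erase a) (C.erase a)) := by
  have hsub : G.interedges C C ⊆
      ({a} ×ˢ C.erase a ∪ C.erase a ×ˢ {a}) ∪ G.interedges (C.erase a) (C.erase a) := by
    rintro ⟨x, y⟩ hxy
    rw [mk_mem_interedges_iff] at hxy
    simp only [mem_union, mem_product, mem_singleton, mem_erase, mk_mem_interedges_iff]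
    have hne := hxy.2.2.ne
    grind
  grw [hsub, card_union_le, card_union_le, card_product, card_product, card_singleton,
    card_erase_of_mem ha]
  omega

lemma card_interedges_self_le_of_inessential {m : ℕ}
    (hmax : ∀ S ⊆ C, Matchable G S → #S ≤ 2 * m)
    (hiness : ∀ a ∈ C, ∃ R ⊆ C.erase a, Matchable G R ∧ #R = 2 * m) :
    #(G.interedges C C) ≤ 2 * m * (2 * m + 1) := by
  obtain rfl | ⟨a₀, ha₀⟩ := C.eq_empty_or_nonempty
  · simp
  obtain ⟨S, hSC, hS, hSm⟩ := hiness a₀ ha₀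
  replace hSC : S ⊆ C := hSC.trans (erase_subset _ _)
  have hmax' : ∀ R ⊆ C, Matchable G R → #R ≤ #S := by simpa only [hSm] using hmax
  have hsub : G.interedges C C ⊆
      S.offDiag ∪ (G.interedges S (C \ S) ∪ G.interedges (C \ S) S) := by
    rintro ⟨x, y⟩ hxy
    obtain ⟨hx, hy, hadj⟩ := (G.mk_mem_interedges_iff).1 hxy
    have hne := hadj.ne
    have hunmatched := hS.not_adj_of_mem_sdiff hSC hmax' (u := x) (v := y)
    simp only [mem_union, mem_offDiag, mk_mem_interedges_iff, mem_sdiff] at hunmatched ⊢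
    tauto
  have hcross : #(G.interedges S (C \ S)) ≤ 2 * m := by
    rw [← hSm]
    refine card_le_card_of_injOn Prod.fst (fun p hp ↦ ((G.mem_interedges_iff).1 hp).1) ?_
    rintro ⟨a, u⟩ hu ⟨_, v⟩ hv rfl
    obtain ⟨ha, hu, hau⟩ := (G.mk_mem_interedges_iff).1 hu
    obtain ⟨-, hv, hav⟩ := (G.mk_mem_interedges_iff).1 hv
    obtain ⟨R, hRC, hR, hRm⟩ := hiness a (hSC ha)
    rw [hS.eq_of_adj_of_mem_sdiff hSC hmax' ha hR hRC (hSm.trans hRm.symm).le hu hv hau hav]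
  have hcross' : #(G.interedges (C \ S) S) ≤ 2 * m := by
    have := G.symm
    rwa [interedges, Rel.card_interedges_comm]
  calc #(G.interedges C C)
      ≤ #S.offDiag + (#(G.interedges S (C \ S)) + #(G.interedges (C \ S) S)) := by
        grw [hsub, card_union_le, card_union_le]
    _ ≤ (2 * m * (2 * m) - 2 * m) + (2 * m + 2 * m) := by
        grw [offDiag_card, hSm, hcross, hcross']
    _ ≤ 2 * m * (2 * m + 1) := by
        have := Nat.le_mul_self (2 * m)
        rw [mul_add_one]
        omega

end DecidableEq

/- Erdős–Gallai, with every edge counted twice. If some `a` lies in every largest matching,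
deleting `a` lowers the matching number and loses at most `#C - 1` edges; otherwise
`card_interedges_self_le_of_inessential` applies. -/
theorem card_interedges_self_le_max [DecidableRel G.Adj] {m : ℕ}
    (hmax : ∀ S ⊆ C, Matchable G S → #S ≤ 2 * m) :
    (#(G.interedges C C) : ℝ) ≤ max (2 * (m : ℝ) * (2 * m + 1)) (m * (2 * (#C : ℝ) - m - 1)) := by
  classical
  induction m generalizing C with
  | zero =>
    have := card_interedges_self_le_of_inessential hmax
      fun _ _ ↦ ⟨∅, empty_subset _, matchable_empty, rfl⟩
    simp_all
  | succ m ih =>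
    by_cases hiness : ∀ a ∈ C, ∃ R ⊆ C.erase a, Matchable G R ∧ #R = 2 * (m + 1)
    · exact le_max_of_le_left (mod_cast card_interedges_self_le_of_inessential hmax hiness)
    push Not at hiness
    obtain ⟨a, ha, hess⟩ := hiness
    have hmax' : ∀ S ⊆ C.erase a, Matchable G S → #S ≤ 2 * m := by
      intro S hSC hS
      have hle := hmax S (hSC.trans (erase_subset _ _)) hS
      obtain ⟨k, hk⟩ := hS.even_card
      have hne := hess S hSC hS
      omega
    have hC : #C = #(C.erase a) + 1 := (card_erase_add_one ha).symm
    have hdel : (#(G.interedges C C) : ℝ) ≤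
        2 * #(C.erase a) + #(G.interedges (C.erase a) (C.erase a)) := by
      exact_mod_cast hC ▸ card_interedges_self_le_add_of_erase (G := G) ha
    specialize ih hmax'
    rw [hC]
    push_cast
    generalize (#(C.erase a) : ℝ) = w at *
    have hm : (0 : ℝ) ≤ m := m.cast_nonneg
    rw [le_max_iff] at ih ⊢
    rcases ih with ih | ih
    · rcases le_total w (4 * m + 3) with hw | hw
      · left; nlinarith
      · right; nlinarith
    · right; nlinarith

end Matchable

section Columns

variable {ι ρ : Type*} {col : ι → Finset ρ} {j : ι}

/-- Two rows are joined in the shared graph of the column `j` if some other column contains both. -/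
def sharedGraph (col : ι → Finset ρ) (j : ι) : SimpleGraph ρ where
  Adj x y := x ≠ y ∧ ∃ i ≠ j, x ∈ col i ∧ y ∈ col i
  symm := ⟨fun _ _ ⟨hne, i, hij, hx, hy⟩ ↦ ⟨hne.symm, i, hij, hy, hx⟩⟩
  loopless := ⟨fun _ h ↦ h.1 rfl⟩

open Classical in
/-- The private pairs of the column `j` are the pairs of distinct rows of `col j` that lie together
in no other column. The pairs are ordered, so that each unordered pair is counted twice. -/
noncomputable def privatePairs (col : ι → Finset ρ) (j : ι) : Finset (ρ × ρ) :=
  {p ∈ (col j).offDiag | ¬ (sharedGraph col j).Adj p.1 p.2}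

open scoped Function in
lemma pairwise_disjoint_privatePairs (col : ι → Finset ρ) :
    Pairwise (Disjoint on privatePairs col) := by
  intro j k hjk
  rw [Function.onFun, Finset.disjoint_left]
  rintro ⟨x, y⟩ hj hk
  simp only [privatePairs, mem_filter, mem_offDiag] at hj hk
  exact hj.2 ⟨hj.1.2.2, k, hjk.symm, hk.1.1, hk.1.2.1⟩

lemma card_privatePairs_add_card_interedges [DecidableRel (sharedGraph col j).Adj] :
    #(privatePairs col j) + #((sharedGraph col j).interedges (col j) (col j)) =
      #(col j).offDiag := by
  classical
  have hshared : (sharedGraph col j).interedges (col j) (col j) =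
      {p ∈ (col j).offDiag | (sharedGraph col j).Adj p.1 p.2} := by
    ext ⟨x, y⟩
    simp only [SimpleGraph.mk_mem_interedges_iff, mem_filter, mem_offDiag]
    exact ⟨fun ⟨hx, hy, h⟩ ↦ ⟨⟨hx, hy, h.ne⟩, h⟩, fun ⟨⟨hx, hy, _⟩, h⟩ ↦ ⟨hx, hy, h⟩⟩
  rw [hshared, privatePairs, add_comm]
  convert card_filter_add_card_filter_not _

lemma le_card_of_le_card_privatePairs [Fintype ι] {T : Finset ρ} {a : ℝ}
    (hcol : ∀ i, col i ⊆ T) (hT : #T < Fintype.card ι) (ha : ∀ i, a ≤ #(privatePairs col i)) :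
    a ≤ #T := by
  classical
  have hsub : univ.biUnion (privatePairs col) ⊆ T ×ˢ T := by
    simp only [biUnion_subset, privatePairs]
    intro i _ p hp
    have hp' := mem_offDiag.1 (mem_filter.1 hp).1
    exact mem_product.2 ⟨hcol i hp'.1, hcol i hp'.2.1⟩
  have hsum : ∑ i, #(privatePairs col i) ≤ #T * #T := by
    rw [← card_biUnion fun i _ k _ hik ↦ pairwise_disjoint_privatePairs col hik, ← card_product]
    exact card_le_card hsub
  have hpos : (0 : ℝ) < Fintype.card ι := by exact_mod_cast (Nat.zero_le _).trans_lt hT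
  refine le_of_mul_le_mul_left ?_ hpos
  calc Fintype.card ι * a = ∑ _i : ι, a := by simp
    _ ≤ ∑ i, (#(privatePairs col i) : ℝ) := sum_le_sum fun i _ ↦ ha i
    _ ≤ #T * #T := mod_cast hsum
    _ ≤ Fintype.card ι * #T := by gcongr

variable [DecidableEq ρ]

lemma Matchable.exists_cover {S : Finset ρ} (hS : Matchable (sharedGraph col j) S) :
    ∃ F : Finset ι, j ∉ F ∧ 2 * #F ≤ #S ∧ S ⊆ F.biUnion col := by
  classical
  induction S using Finset.strongInduction with
  | H S ih =>
    obtain rfl | ⟨a, ha⟩ := S.eq_empty_or_nonempty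
    · exact ⟨∅, by simp⟩
    obtain ⟨b, hb, ⟨hab, i, hij, hai, hbi⟩, hS'⟩ := hS.exists_adj_sdiff ha
    have hpair : {a, b} ⊆ S := insert_subset ha (singleton_subset_iff.2 hb)
    obtain ⟨F, hjF, hF, hSF⟩ := ih _ (sdiff_ssubset hpair (insert_nonempty a _)) hS'
    refine ⟨insert i F, by simp [hjF, hij.symm], ?_, ?_⟩
    · have hcard := card_sdiff_add_card_eq_card hpair
      rw [card_pair hab] at hcard
      grw [card_insert_le]
      omega
    · rw [biUnion_insert, ← union_sdiff_of_subset hpair]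
      exact union_subset_union (insert_subset hai (singleton_subset_iff.2 hbi)) hSF

lemma exists_cover_of_not_isolatedCol {R : Finset ρ} (hj : ¬ IsolatedCol col j) (hR : R ⊆ col j) :
    ∃ F : Finset ι, j ∉ F ∧ #F ≤ #R ∧ R ⊆ F.biUnion col := by
  classical
  have hother : ∀ x ∈ R, ∃ i ≠ j, x ∈ col i := fun x hx ↦ by
    by_contra! honly
    exact hj ⟨x, hR hx, fun i hi ↦ by_contra fun hij ↦ honly i hij hi⟩
  have : Nonempty ι := ⟨j⟩
  choose! f hfj hf using hother
  exact ⟨R.image f, by simpa using hfj, card_image_le, fun x hx ↦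
    mem_biUnion.2 ⟨f x, mem_image_of_mem f hx, hf x hx⟩⟩

namespace Disjunct

variable {d : ℕ}

lemma add_card_le_of_matchable (h : Disjunct d col) (hj : ¬ IsolatedCol col j)
    {S : Finset ρ} (hS : Matchable (sharedGraph col j) S) (hSj : S ⊆ col j) :
    2 * (d + 1) + #S ≤ 2 * #(col j) := by
  classical
  obtain ⟨F, hjF, hF, hSF⟩ := hS.exists_cover
  obtain ⟨F', hjF', hF', hSF'⟩ := exists_cover_of_not_isolatedCol hj (sdiff_subset (t := S))
  by_contra! hlt
  have hcard := card_sdiff_add_card_eq_card hSj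
  refine h j (F ∪ F') (by simp [hjF, hjF']) ?_ ?_
  · grw [card_union_le]
    omega
  · rw [union_biUnion, ← union_sdiff_of_subset hSj]
    exact union_subset_union hSF hSF'

lemma lt_card_of_not_isolatedCol (h : Disjunct d col) (hj : ¬ IsolatedCol col j) :
    d < #(col j) := by
  have := h.add_card_le_of_matchable hj matchable_empty (empty_subset _)
  simp only [card_empty] at this
  omega

lemma comp_injective {κ : Type*} {f : κ → ι} (h : Disjunct d col) (hf : f.Injective) :
    Disjunct d (col ∘ f) := by
  classical
  intro j S hj hS hsub
  refine h (f j) (S.image f) (by simpa [hf.eq_iff] using hj) (card_image_le.trans hS) ?_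
  rwa [image_biUnion]

lemma sdiff (h : Disjunct (d + 1) col) (j : ι) :
    Disjunct d fun i : {i // i ≠ j} ↦ col i \ col j := by
  classical
  intro k S hk hS hsub
  refine h k (insert j (S.map (.subtype _))) ?_ ?_ ?_
  · simpa [k.2] using hk
  · grw [card_insert_le, card_map, hS]
  · intro x hx
    by_cases hxj : x ∈ col j
    · exact mem_biUnion.2 ⟨j, mem_insert_self _ _, hxj⟩
    · obtain ⟨i, hi, hxi⟩ := mem_biUnion.1 (hsub (mem_sdiff.2 ⟨hx, hxj⟩))
      exact mem_biUnion.2 ⟨i, by simpa using .inr ⟨i.2, hi⟩, (mem_sdiff.1 hxi).1⟩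

end Disjunct

end Columns

/- In terms of `u = (2 * c - 1) * d`, the bound on the first entry of the maximum becomes a
quadratic in `q` once `u` is replaced by its least possible value `q + c + 1`; its leading
coefficient is `-(12 * c ^ 2 - 15 * c + 4)`, whence the constant of the theorem. -/
lemma mul_sq_add_max_le {c d q : ℝ} (hc : 12 * c ^ 2 - 15 * c + 4 ≤ 0) (hd : 0 ≤ d) (hq : 0 ≤ q)
    (hdq : d + 1 + q ≤ c * (2 * d - 1)) :
    c * d ^ 2 + max (2 * q * (2 * q + 1)) (q * (2 * (d + 1 + q) - q - 1)) ≤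
      (d + 1 + q) * (d + q) := by
  have hc0 : 0 ≤ c := by nlinarith
  have hc1 : 0 ≤ 1 - c := by nlinarith
  rw [← le_sub_iff_add_le', max_le_iff]
  constructor
  · have hk : 0 < 2 * c - 1 := by nlinarith
    set u := (2 * c - 1) * d with hu
    have hqu : q + c + 1 ≤ u := by linarith
    have hquad : 0 ≤ (1 - c) * (q + c + 1) ^ 2 + (2 * c - 1) * (q + c + 1) * (2 * q + 1) -
        (2 * c - 1) ^ 2 * (3 * q ^ 2 + q) := by
      have hcoeff : 0 ≤ -(12 * c ^ 2 - 15 * c + 4) := neg_nonneg.2 hc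
      have : 0 ≤ -(12 * c ^ 2 - 15 * c + 4) * q ^ 2 +
          (2 * ((1 - c) * (1 + c)) + 4 * (2 * c - 1)) * q +
          ((1 - c) * (1 + c) ^ 2 + (2 * c - 1) * (c + 1)) := by positivity
      linear_combination this
    have hquad' : 0 ≤ (1 - c) * u ^ 2 + (2 * c - 1) * u * (2 * q + 1) -
        (2 * c - 1) ^ 2 * (3 * q ^ 2 + q) := by
      grw [hquad, hqu]
    have hscaled : 0 ≤ (2 * c - 1) ^ 2 * ((1 - c) * d ^ 2 + d * (2 * q + 1) - (3 * q ^ 2 + q)) := by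
      rw [hu] at hquad'
      linear_combination hquad'
    have := nonneg_of_mul_nonneg_right hscaled (by positivity)
    linarith
  · linear_combination d * hc1 * d + hd

namespace Disjunct

variable {ι ρ : Type*} [DecidableEq ρ] {col : ι → Finset ρ} {j : ι} {d : ℕ} {c : ℝ}

lemma mul_sq_le_card_privatePairs (h : Disjunct d col) (hj : ¬ IsolatedCol col j)
    (hc : 12 * c ^ 2 - 15 * c + 4 ≤ 0) (hlight : #(col j) ≤ c * (2 * d - 1)) :
    c * d ^ 2 ≤ #(privatePairs col j) := by
  classical
  obtain ⟨m, hm⟩ := Nat.exists_eq_add_of_le (h.lt_card_of_not_isolatedCol hj)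
  have hshared := card_interedges_self_le_max (G := sharedGraph col j) (C := col j) (m := m)
    fun S hSj hS ↦ by
      have := h.add_card_le_of_matchable hj hS hSj
      omega
  have hsplit : (#(privatePairs col j) : ℝ) + #((sharedGraph col j).interedges (col j) (col j)) =
      (d + 1 + m) * (d + m) := by
    have hoff : #(col j).offDiag = (d + 1 + m) * (d + m) := by
      rw [offDiag_card, hm, ← Nat.mul_sub_one]
      congr 1
      omega
    exact_mod_cast card_privatePairs_add_card_interedges.trans hoff
  have hcard : (#(col j) : ℝ) = d + 1 + m := by simp [hm]
  rw [hcard] at hshared hlight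
  linarith [mul_sq_add_max_le hc d.cast_nonneg m.cast_nonneg hlight]

/- Isolated columns and columns with more than `c * (2 * d - 1)` rows are deleted one by one, the
latter at the cost of lowering `d`; their rows pay for it, since
`c * (2 * d - 1) = c * d ^ 2 - c * (d - 1) ^ 2`. -/
theorem mul_sq_le_card [Fintype ι] {T : Finset ρ} (h : Disjunct d col) (hcol : ∀ i, col i ⊆ T)
    (hT : #T < Fintype.card ι) (hc : 12 * c ^ 2 - 15 * c + 4 ≤ 0) : c * d ^ 2 ≤ #T := by
  classical
  induction hn : Fintype.card ι generalizing ι d T with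
  | zero => omega
  | succ n ih =>
    have hcard (j : ι) : Fintype.card {i // i ≠ j} = n := by
      simp [Fintype.card_subtype_compl, hn]
    by_cases hiso : ∃ j, IsolatedCol col j
    · obtain ⟨j, x, hxj, hx⟩ := hiso
      have hxT : x ∈ T := hcol j hxj
      have hcol' (i : {i // i ≠ j}) : col i ⊆ T.erase x :=
        subset_erase.2 ⟨hcol i, fun hxi ↦ i.2 (hx i hxi)⟩
      have hT' : #(T.erase x) < Fintype.card {i // i ≠ j} := by
        have := card_erase_add_one hxT
        rw [hcard]
        omega
      have hle := ih (h.comp_injective Subtype.val_injective) hcol' hT' (hcard j)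
      exact hle.trans (mod_cast card_erase_le)
    push Not at hiso
    by_cases hheavy : ∃ j, c * (2 * d - 1) < #(col j)
    · obtain ⟨j, hj⟩ := hheavy
      cases d with
      | zero => simp
      | succ d =>
        have hjT := card_sdiff_add_card_eq_card (hcol j)
        have hT' : #(T \ col j) < Fintype.card {i // i ≠ j} := by
          have := h.lt_card_of_not_isolatedCol (hiso j)
          rw [hcard]
          omega
        have hle := ih (h.sdiff j) (fun i ↦ sdiff_subset_sdiff (hcol i) le_rfl) hT' (hcard j)
        rw [← hjT]
        push_cast at hj ⊢
        linarith
    push Not at hheavy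
    exact le_card_of_le_card_privatePairs hcol hT
      fun j ↦ h.mul_sq_le_card_privatePairs (hiso j) hc (hheavy j)

end Disjunct

lemma exists_disjunct_tmin (d n : ℕ) :
    ∃ col : Fin n → Finset (Fin (tmin d n)), Disjunct d col := by
  refine Nat.sInf_mem (s := {t | ∃ col : Fin n → Finset (Fin t), Disjunct d col})
    ⟨n, fun i ↦ {i}, fun j S hj _ hsub ↦ hj ?_⟩
  simpa using hsub

/-- The minimal number of tests satisfies `t(d,n) ≥ min ((15+√33)/24 · d²) n`. -/
theorem tmin_lower_bound (d n : ℕ) (hd : 1 ≤ d) (hn : 1 ≤ n) :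
    min (((15 + Real.sqrt 33) / 24) * (d : ℝ) ^ 2) (n : ℝ) ≤ (tmin d n : ℝ) := by
  obtain hnt | htn := le_or_gt n (tmin d n)
  · exact min_le_of_right_le (mod_cast hnt)
  obtain ⟨col, hcol⟩ := exists_disjunct_tmin d n
  have hroot : 12 * ((15 + √33) / 24) ^ 2 - 15 * ((15 + √33) / 24) + 4 ≤ 0 := by
    linear_combination Real.sq_sqrt (show (0 : ℝ) ≤ 33 by norm_num) / 48
  have hbound := hcol.mul_sq_le_card (fun i ↦ subset_univ _) (by simpa using htn) hroot
  rw [card_fin] at hbound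
  exact min_le_of_left_le hbound
end
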